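/- In a pairwise binary MRF on a single edge {s,t} with symmetric potentials, the α-BP message log-ratio update F(z_{ts}, z_{st}) = ((1−α)z_{ts} + H(2θ_s + (1−α)z_{st}; 2αθ), (1−α)z_{st} + H(2θ_t + (1−α)z_{ts}; 2αθ)) is a contraction on ℝ² in the ℓ^∞ norm whenever |1−α|(1 + tanh(|αθ|)) < 1. -/

import Mathlib

open Real

/-!
The function `H(·; κ)` has derivative `sinh κ / (cosh μ + cosh κ)`. Since `1 ≤ cosh μ`, its absolute
value is at most `|sinh κ| / (1 + cosh κ) = |tanh (κ / 2)|`, which for `κ = 2αθ` is `tanh |αθ|`.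
Each component of the update is `1 - α` times one coordinate plus `H(·; 2αθ)` evaluated at an affine
function of slope `1 - α` in the other, so its Lipschitz constant in the sup metric is at most
`|1 - α| + tanh |αθ| |1 - α|`.
-/

open scoped NNReal

theorem abs_tanh (x : ℝ) : |tanh x| = tanh |x| := by
  rw [tanh_eq_sinh_div_cosh, tanh_eq_sinh_div_cosh, abs_div, abs_sinh, cosh_abs,
    abs_of_pos (cosh_pos x)]

theorem tanh_half (x : ℝ) : tanh (x / 2) = sinh x / (1 + cosh x) := by
  obtain ⟨y, rfl⟩ : ∃ y, x = 2 * y := ⟨x / 2, by ring⟩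
  have hcosh : 1 + cosh (2 * y) = 2 * cosh y ^ 2 := by
    rw [cosh_two_mul, sinh_sq]
    ring
  rw [mul_div_cancel_left₀ y two_ne_zero, tanh_eq_sinh_div_cosh, sinh_two_mul, hcosh]
  field_simp

/-- The function `H(μ; κ)`: the log-ratio of the message sent across an edge with coupling `κ / 2`
by a binary variable whose own log-ratio is `μ`. The coupling comes first, so that
`messageLogRatio κ` is the map whose Lipschitz constant is at stake. -/
noncomputable def messageLogRatio (κ μ : ℝ) : ℝ :=
  log ((exp (μ + κ) + 1) / (exp μ + exp κ))

theorem hasDerivAt_messageLogRatio (κ μ : ℝ) :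
    HasDerivAt (messageLogRatio κ) (sinh κ / (cosh μ + cosh κ)) μ := by
  have hnum : HasDerivAt (fun μ ↦ exp (μ + κ) + 1) (exp (μ + κ)) μ :=
    ((hasDerivAt_exp (μ + κ)).comp_add_const μ κ).add_const 1
  have hden : HasDerivAt (fun μ ↦ exp μ + exp κ) (exp μ) μ :=
    (hasDerivAt_exp μ).add_const (exp κ)
  have hlog_div : messageLogRatio κ =
      fun μ ↦ log (exp (μ + κ) + 1) - log (exp μ + exp κ) :=
    funext fun μ ↦ log_div (by positivity) (by positivity)
  have hderiv : sinh κ / (cosh μ + cosh κ) =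
      exp (μ + κ) / (exp (μ + κ) + 1) - exp μ / (exp μ + exp κ) := by
    rw [sinh_eq, cosh_eq, cosh_eq, exp_neg, exp_neg, exp_add]
    field_simp
    ring
  rw [hlog_div, hderiv]
  exact (hnum.log (by positivity)).sub (hden.log (by positivity))

theorem abs_sinh_div_cosh_add_cosh_le (κ μ : ℝ) :
    |sinh κ / (cosh μ + cosh κ)| ≤ |tanh (κ / 2)| := by
  rw [tanh_half, abs_div, abs_div, abs_of_pos (by positivity : 0 < cosh μ + cosh κ),
    abs_of_pos (by positivity : 0 < 1 + cosh κ)]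
  gcongr
  exact one_le_cosh μ

theorem lipschitzWith_messageLogRatio (κ : ℝ) :
    LipschitzWith ‖tanh (κ / 2)‖₊ (messageLogRatio κ) := by
  refine lipschitzWith_of_nnnorm_deriv_le
    (fun μ ↦ (hasDerivAt_messageLogRatio κ μ).differentiableAt) fun μ ↦ ?_
  rw [(hasDerivAt_messageLogRatio κ μ).deriv]
  exact abs_sinh_div_cosh_add_cosh_le κ μ

theorem lipschitzWith_smul_add_comp {𝕜 E X : Type*} [NormedField 𝕜] [SeminormedAddCommGroup E]
    [NormedSpace 𝕜 E] [PseudoEMetricSpace X] {K : ℝ≥0} {h : E → E} {f g : X → E}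
    (hh : LipschitzWith K h) (hf : LipschitzWith 1 f) (hg : LipschitzWith 1 g) (a : 𝕜) (b : E) :
    LipschitzWith (‖a‖₊ * (1 + K)) fun x ↦ a • f x + h (b + a • g x) := by
  have hsmul : LipschitzWith ‖a‖₊ fun x ↦ a • f x := by
    simpa using! (lipschitzWith_smul a).comp hf
  have haffine : LipschitzWith ‖a‖₊ fun x ↦ b + a • g x := by
    simpa using! (LipschitzWith.const b).add ((lipschitzWith_smul a).comp hg)
  convert! hsmul.add (hh.comp haffine) using 1
  ring

theorem single_edge_alphaBP_contraction_general (α θ θs θt : ℝ)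
    (H : ℝ → ℝ → ℝ)
    (hH : ∀ μ κ, H μ κ = Real.log ((Real.exp (μ + κ) + 1) / (Real.exp μ + Real.exp κ)))
    (F : ℝ × ℝ → ℝ × ℝ)
    (hF : ∀ z : ℝ × ℝ, F z =
      ((1 - α) * z.1 + H (2 * θs + (1 - α) * z.2) (2 * α * θ),
       (1 - α) * z.2 + H (2 * θt + (1 - α) * z.1) (2 * α * θ))) :
    ∀ z w : ℝ × ℝ,
      max |(F z).1 - (F w).1| |(F z).2 - (F w).2|
        ≤ (|1 - α| * (1 + Real.tanh |α * θ|)) * max |z.1 - w.1| |z.2 - w.2| := by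
  have hH_lip : LipschitzWith ‖tanh (α * θ)‖₊ fun μ ↦ H μ (2 * α * θ) := by
    have hκ : 2 * α * θ / 2 = α * θ := by ring
    simpa only [hκ, funext (hH · (2 * α * θ))] using! lipschitzWith_messageLogRatio (2 * α * θ)
  have hF_lip : LipschitzWith (‖1 - α‖₊ * (1 + ‖tanh (α * θ)‖₊)) F := by
    rw [funext hF, ← max_self (‖1 - α‖₊ * _)]
    exact (lipschitzWith_smul_add_comp hH_lip .prod_fst .prod_snd (1 - α) (2 * θs)).prodMk
      (lipschitzWith_smul_add_comp hH_lip .prod_snd .prod_fst (1 - α) (2 * θt))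
  intro z w
  rw [← abs_tanh]
  exact hF_lip.dist_le_mul z w

/-- On a single edge `{s,t}` of a binary pairwise MRF with symmetric potentials, the
α-BP log-ratio message update is an `ℓ^∞` contraction whenever
`|1−α| (1 + tanh|αθ|) < 1`. -/
theorem single_edge_alphaBP_contraction (α θ θs θt : ℝ)
    (H : ℝ → ℝ → ℝ)
    (hH : ∀ μ κ, H μ κ = Real.log ((Real.exp (μ + κ) + 1) / (Real.exp μ + Real.exp κ)))
    (F : ℝ × ℝ → ℝ × ℝ)
    (hF : ∀ z : ℝ × ℝ, F z =
      ((1 - α) * z.1 + H (2 * θs + (1 - α) * z.2) (2 * α * θ),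
       (1 - α) * z.2 + H (2 * θt + (1 - α) * z.1) (2 * α * θ)))
    (hcontr : |1 - α| * (1 + Real.tanh |α * θ|) < 1) :
    ∀ z w : ℝ × ℝ,
      max |(F z).1 - (F w).1| |(F z).2 - (F w).2|
        ≤ (|1 - α| * (1 + Real.tanh |α * θ|)) * max |z.1 - w.1| |z.2 - w.2| :=
  single_edge_alphaBP_contraction_general α θ θs θt H hH F hF
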